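/- Let n ≥ 1 and let P : Matrix (Fin n) (Fin n) ℝ be row-stochastic with P i j > 0 for all i, j. If π and π' are probability vectors (nonnegative entries summing to 1) with π ᵥ* P = π and π' ᵥ* P = π', then π = π'. That is, a Markov chain whose transition matrix has all entries strictly positive has a unique stationary distribution. -/

import Mathlib

/-!
The difference `d = π - π'` satisfies `d ᵥ* P = d` and has total mass zero. The triangle inequality
gives `|d j| ≤ ∑ i, |d i| * P i j`, and both sides have the same sum over `j` because the rows of
`P` sum to one, so equality holds for every `j` (`abs_fixed`). As all entries in column `j` are
positive, equality in the triangle inequality forces all `d i` to have the same sign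
(`nonneg_of_fixed`). A vector of constant sign with total mass zero vanishes.
-/

open Matrix

/-- The absolute value of a left fixed vector of a stochastic matrix is again a left fixed
vector. -/
lemma abs_fixed {n : ℕ} (P : Matrix (Fin n) (Fin n) ℝ)
    (hpos : ∀ i j, 0 < P i j) (hrow : ∀ i, ∑ j, P i j = 1)
    (d : Fin n → ℝ) (hd : ∀ j, ∑ i, d i * P i j = d j) (j : Fin n) :
    |d j| = ∑ i, |d i| * P i j := by
  have hle : ∀ j ∈ Finset.univ, |d j| ≤ ∑ i, |d i| * P i j := by
    intro j _
    calc |d j| = |∑ i, d i * P i j| := by rw [hd j]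
      _ ≤ ∑ i, |d i * P i j| := Finset.abs_sum_le_sum_abs _ _
      _ = ∑ i, |d i| * P i j := by simp only [abs_mul, abs_of_pos (hpos _ _)]
  have hsum : ∑ j, |d j| = ∑ j, ∑ i, |d i| * P i j := by
    rw [Finset.sum_comm]
    simp only [← Finset.mul_sum, hrow, mul_one]
  exact (Finset.sum_eq_sum_iff_of_le hle).1 hsum j (Finset.mem_univ j)

/-- A left fixed vector of a positive stochastic matrix with one nonnegative entry is
nonnegative. -/
lemma nonneg_of_fixed {n : ℕ} (P : Matrix (Fin n) (Fin n) ℝ)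
    (hpos : ∀ i j, 0 < P i j) (hrow : ∀ i, ∑ j, P i j = 1)
    (d : Fin n → ℝ) (hd : ∀ j, ∑ i, d i * P i j = d j) (j : Fin n) (hj : 0 ≤ d j)
    (i : Fin n) : 0 ≤ d i := by
  have heq : ∑ i, d i * P i j = ∑ i, |d i| * P i j := by
    rw [hd j, ← abs_fixed P hpos hrow d hd j, abs_of_nonneg hj]
  have hterm := (Finset.sum_eq_sum_iff_of_le
    (fun i _ => mul_le_mul_of_nonneg_right (le_abs_self (d i)) (hpos i j).le)).1 heq i
      (Finset.mem_univ i)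
  exact abs_eq_self.1 (mul_right_cancel₀ (hpos i j).ne' hterm).symm

/-- A row-stochastic matrix with all entries strictly positive has a unique stationary
probability distribution. -/
theorem stationary_distribution_unique (n : ℕ) (hn : 1 ≤ n)
    (P : Matrix (Fin n) (Fin n) ℝ)
    (hpos : ∀ i j, 0 < P i j) (hrow : ∀ i, ∑ j, P i j = 1)
    (π π' : Fin n → ℝ)
    (hπ0 : ∀ i, 0 ≤ π i) (hπ1 : ∑ i, π i = 1) (hπ : π ᵥ* P = π)
    (hπ'0 : ∀ i, 0 ≤ π' i) (hπ'1 : ∑ i, π' i = 1) (hπ' : π' ᵥ* P = π') :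
    π = π' := by
  -- By symmetry, the first entry of `π - π'` may be taken nonnegative.
  wlog hj : π' ⟨0, hn⟩ ≤ π ⟨0, hn⟩ generalizing π π'
  · exact (this π' π hπ'0 hπ'1 hπ' hπ0 hπ1 hπ (le_of_not_ge hj)).symm
  have hd : ∀ j, ∑ i, (π i - π' i) * P i j = π j - π' j := by
    intro j
    have h := congrFun hπ j
    have h' := congrFun hπ' j
    simp only [vecMul, dotProduct] at h h'
    simp only [sub_mul, Finset.sum_sub_distrib, h, h']
  have hle : ∀ i ∈ Finset.univ, π' i ≤ π i := fun i _ =>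
    sub_nonneg.1 (nonneg_of_fixed P hpos hrow (fun i => π i - π' i) hd ⟨0, hn⟩
      (sub_nonneg.2 hj) i)
  funext i
  exact ((Finset.sum_eq_sum_iff_of_le hle).1 (hπ'1.trans hπ1.symm) i (Finset.mem_univ i)).symm
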